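/- arXiv:2106.00315 — 2 statements merged into one kernel-verified Lean document; each statement's English description precedes it below -/
import Mathlib

section
/- Let A be a trim DFA over an ordered alphabet (Σ,≺) with n states, initial state q₀, and let L = L(A). Then L is NOT Wheeler with respect to (Σ,≺) if and only if there exist words μ, ν, γ ∈ Σ* such that γ is not a suffix of μ and not a suffix of ν, and: (1) μ and ν label paths from q₀ to states u and v respectively with μ ≢_L ν; (2) γ labels a cycle starting and ending at u and a cycle starting and ending at v; (3) either both μ ≺ γ and ν ≺ γ, or both γ ≺ μ and γ ≺ ν. Moreover, when such words exist, they can be chosen with |μ| ≤ |γ|, |ν| ≤ |γ| and |γ| ≤ n³ + 2n² + n + 2. -/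
/-!
Common framework: words over an ordered alphabet, co-lexicographic order,
(partial) DFAs and NFAs, Wheeler automata and Wheeler languages,
following "Ordering regular languages: a danger zone".
-/

namespace WheelerPaper

/-- Strict co-lexicographic order on words: compare the reverses lexicographically. -/
def Colex {A : Type} [LinearOrder A] (x y : List A) : Prop :=
  List.Lex (· < ·) x.reverse y.reverse

/-- Non-strict co-lexicographic order. -/
def ColexLE {A : Type} [LinearOrder A] (x y : List A) : Prop :=
  Colex x y ∨ x = y

/-- Right context `α⁻¹L` of a word `α` with respect to a language `L`. -/
def rc {A : Type} (L : Set (List A)) (α : List A) : Set (List A) :=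
  {γ | α ++ γ ∈ L}

/-- `Pref L`: the set of prefixes of words of `L`. -/
def Pref {A : Type} (L : Set (List A)) : Set (List A) :=
  {α | ∃ β, α ++ β ∈ L}

/-- `wpow γ i` is `γ^i`, the `i`-fold concatenation of the word `γ`. -/
def wpow {A : Type} (γ : List A) : ℕ → List A
  | 0 => []
  | n + 1 => γ ++ wpow γ n

/-- A DFA with a possibly partial transition function. -/
structure PDFA (A : Type) (Q : Type) where
  init : Q
  trans : Q → A → Option Q
  accept : Q → Prop

/-- Extended (partial) transition function of a `PDFA`. -/
def PDFA.evalFrom {A Q : Type} (M : PDFA A Q) : Q → List A → Option Q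
  | q, [] => some q
  | q, a :: w => (M.trans q a).bind fun q' => PDFA.evalFrom M q' w

/-- The language accepted by a `PDFA`. -/
def PDFA.accepts {A Q : Type} (M : PDFA A Q) : Set (List A) :=
  {w | ∃ q, M.evalFrom M.init w = some q ∧ M.accept q}

/-- A `PDFA` is trim if every state is reachable from the initial state and
every state can reach some accepting state. -/
def PDFA.Trim {A Q : Type} (M : PDFA A Q) : Prop :=
  (∀ q : Q, ∃ α, M.evalFrom M.init α = some q) ∧
  (∀ q : Q, ∃ α q', M.evalFrom q α = some q' ∧ M.accept q')

/-- `r` is a Wheeler order for the DFA `M`: a strict total order on states whose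
minimum is the initial state, the initial state has no incoming transitions, and
the two Wheeler conditions hold. -/
def IsWheelerOrder {A Q : Type} [LinearOrder A] (M : PDFA A Q) (r : Q → Q → Prop) : Prop :=
  IsStrictTotalOrder Q r ∧
  (∀ q : Q, q ≠ M.init → r M.init q) ∧
  (∀ (q : Q) (a : A), M.trans q a ≠ some M.init) ∧
  (∀ (u₁ : Q) (a₁ : A) (v₁ : Q) (u₂ : Q) (a₂ : A) (v₂ : Q),
     M.trans u₁ a₁ = some v₁ → M.trans u₂ a₂ = some v₂ →
     (a₁ < a₂ → r v₁ v₂) ∧ (a₁ = a₂ → r u₁ u₂ → (r v₁ v₂ ∨ v₁ = v₂)))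

/-- A language is Wheeler (w.r.t. the given order on the alphabet) if it is
recognized by some Wheeler DFA. -/
def IsWheelerLang {A : Type} [LinearOrder A] (L : Set (List A)) : Prop :=
  ∃ (n : ℕ) (M : PDFA A (Fin n)) (r : Fin n → Fin n → Prop),
    IsWheelerOrder M r ∧ M.accepts = L

/-- A language is regular if it is recognized by some finite-state (partial) DFA. -/
def IsRegular {A : Type} (L : Set (List A)) : Prop :=
  ∃ (k : ℕ) (M : PDFA A (Fin k)), M.accepts = L

/-- The input-consistent convex refinement `≡^c_L` of the Myhill–Nerode
equivalence: same right context, same last character (or both empty), and every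
word of `Pref L` co-lexicographically between the two words has the same right
context. -/
def EquivC {A : Type} [LinearOrder A] (L : Set (List A)) (α β : List A) : Prop :=
  rc L α = rc L β ∧ α.getLast? = β.getLast? ∧
  ∀ γ ∈ Pref L,
    ((ColexLE α γ ∧ ColexLE γ β) ∨ (ColexLE β γ ∧ ColexLE γ α)) →
    rc L γ = rc L α

/-- An NFA with a single initial state. -/
structure NFA' (A : Type) (Q : Type) where
  init : Q
  trans : Q → A → Set Q
  accept : Q → Prop

/-- One step of an `NFA'` on a set of states. -/
def NFA'.stepSet {A Q : Type} (M : NFA' A Q) (S : Set Q) (a : A) : Set Q :=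
  {q | ∃ p ∈ S, q ∈ M.trans p a}

/-- Extended transition function of an `NFA'` on sets of states. -/
def NFA'.evalFrom {A Q : Type} (M : NFA' A Q) : Set Q → List A → Set Q
  | S, [] => S
  | S, a :: w => NFA'.evalFrom M (M.stepSet S a) w

/-- The language accepted by an `NFA'`. -/
def NFA'.accepts {A Q : Type} (M : NFA' A Q) : Set (List A) :=
  {w | ∃ q ∈ M.evalFrom {M.init} w, M.accept q}

/-- An `NFA'` is trim if every state is reachable from the initial state and
every state can reach some accepting state. -/
def NFA'.Trim {A Q : Type} (M : NFA' A Q) : Prop :=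
  (∀ q : Q, ∃ α, q ∈ M.evalFrom {M.init} α) ∧
  (∀ q : Q, ∃ α, ∃ q' ∈ M.evalFrom {q} α, M.accept q')

/-- `r` is a Wheeler order for the NFA `M`. -/
def IsWheelerNFAOrder {A Q : Type} [LinearOrder A] (M : NFA' A Q) (r : Q → Q → Prop) : Prop :=
  IsStrictTotalOrder Q r ∧
  (∀ q : Q, q ≠ M.init → r M.init q) ∧
  (∀ (q : Q) (a : A), M.init ∉ M.trans q a) ∧
  (∀ (u₁ : Q) (a₁ : A) (v₁ : Q) (u₂ : Q) (a₂ : A) (v₂ : Q),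
     v₁ ∈ M.trans u₁ a₁ → v₂ ∈ M.trans u₂ a₂ →
     (a₁ < a₂ → r v₁ v₂) ∧ (a₁ = a₂ → r u₁ u₂ → (r v₁ v₂ ∨ v₁ = v₂)))

/-- `I` is an interval with respect to the strict order `r`. -/
def IsIntervalRel {Q : Type} (r : Q → Q → Prop) (I : Set Q) : Prop :=
  ∀ x y z : Q, (r x y ∨ x = y) → (r y z ∨ y = z) → x ∈ I → z ∈ I → y ∈ I

/-- The class of star-free languages: built from `∅`, `{ε}` and the singletons
`{a}` by union, concatenation and complement. -/
inductive StarFree {A : Type} : Set (List A) → Prop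
  | empty : StarFree ∅
  | eps : StarFree {[]}
  | single (a : A) : StarFree {[a]}
  | union {L₁ L₂ : Set (List A)} : StarFree L₁ → StarFree L₂ → StarFree (L₁ ∪ L₂)
  | concat {L₁ L₂ : Set (List A)} : StarFree L₁ → StarFree L₂ →
      StarFree {w | ∃ u v, u ∈ L₁ ∧ v ∈ L₂ ∧ w = u ++ v}
  | compl {L : Set (List A)} : StarFree L → StarFree Lᶜ


/-- The language of all words over the sub-alphabet `S`. -/
def wordsOver {A : Type} (S : Set A) : Language A := {w | ∀ x ∈ w, x ∈ S}

/-!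
The states of the smallest Wheeler DFA of `L` are the classes of `≡^c_L` on `Pref L`, so `L` is
Wheeler if and only if there are finitely many of them.

If `μ`, `ν`, `γ` are as in the theorem then, up to exchanging `μ` and `ν`, the word `ν γ^i` lies
between `μ γ^i` and `μ γ^j` for all `i < j`. Since it is not Myhill–Nerode equivalent to them, the
words `μ γ^i` lie in pairwise different classes.

Conversely, among infinitely many classes two contain words that lead to the same state and share a
long suffix. They are separated by a prefix of `L` with another right context, which must share this
suffix too. The three runs on the common suffix repeat a triple of states: this gives a word `δ`
that labels loops at three states, reached by three words `x₀ ≺ x₁ ≺ x₂` where the second is not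
equivalent to either of the others. Let `γ` be a power of `δ` longer than all the `xᵢ`. If `x₁ ≺ γ`,
then `x₀` and `x₁` lie below `γ`; otherwise `x₁` and `x₂` lie above it. With `N` states the triple
repeats within `N³` letters, and the words before the common suffix can be shortened to `N² + N`
letters, whence the bound `N³ + N² + N` on the length of `γ`.
-/

section Colex

variable {A : Type} [LinearOrder A]

theorem colex_iff_reverse_lt {x y : List A} : Colex x y ↔ x.reverse < y.reverse := Iff.rfl

theorem colexLE_iff_reverse_le {x y : List A} : ColexLE x y ↔ x.reverse ≤ y.reverse := by
  rw [ColexLE, colex_iff_reverse_lt, le_iff_lt_or_eq, List.reverse_inj]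

instance colex_isStrictTotalOrder : IsStrictTotalOrder (List A) Colex :=
  (RelEmbedding.preimage ⟨List.reverse, List.reverse_injective⟩ (· < ·)).isStrictTotalOrder

theorem strictMono_append (w : List A) : StrictMono (w ++ ·) :=
  fun _ _ => List.append_left_lt

theorem colex_append_right_iff {x y : List A} (w : List A) :
    Colex (x ++ w) (y ++ w) ↔ Colex x y := by
  simp only [colex_iff_reverse_lt, List.reverse_append]
  exact (strictMono_append w.reverse).lt_iff_lt

theorem colex_append_of_colex {x y : List A} (h : Colex x y) (w : List A) :
    Colex x (w ++ y) := by
  rw [colex_iff_reverse_lt, List.reverse_append]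
  exact List.Lex.append_right _ _ h

theorem append_lt_of_lt_of_not_prefix {x y : List A} (h : x < y) (hxy : ¬ x <+: y)
    (w : List A) : x ++ w < y := by
  induction x generalizing y with
  | nil => exact absurd List.nil_prefix hxy
  | cons a x ih =>
    cases y with
    | nil => exact absurd h (List.not_lt_nil _)
    | cons b y =>
      rw [List.cons_append, List.cons_lt_cons_iff]
      rw [List.cons_lt_cons_iff] at h
      refine h.imp_right fun ⟨hab, h⟩ => ⟨hab, ih h fun hp => hxy ?_⟩
      rwa [hab, List.prefix_cons_inj]

theorem append_colex_of_colex_of_not_suffix {x y : List A} (h : Colex x y) (hxy : ¬ x <:+ y)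
    (w : List A) : Colex (w ++ x) y := by
  rw [colex_iff_reverse_lt, List.reverse_append]
  exact append_lt_of_lt_of_not_prefix h (by rwa [List.reverse_prefix]) _

theorem lt_iff_head?_lt {x y : List A} (h : x.head? ≠ y.head?) :
    x < y ↔ x.head? < y.head? := by
  cases x <;> cases y <;> simp_all [List.cons_lt_cons_iff]

theorem colex_iff_getLast?_lt {x y : List A} (h : x.getLast? ≠ y.getLast?) :
    Colex x y ↔ x.getLast? < y.getLast? := by
  simp only [List.getLast?_eq_head?_reverse] at h ⊢
  exact lt_iff_head?_lt h

theorem colex_congr_getLast? {x y x' y' : List A} (h : x.getLast? ≠ y.getLast?)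
    (hx : x'.getLast? = x.getLast?) (hy : y'.getLast? = y.getLast?) :
    Colex x' y' ↔ Colex x y := by
  rw [colex_iff_getLast?_lt h, colex_iff_getLast?_lt (by rwa [hx, hy]), hx, hy]

theorem ordConnected_range_append (w : List A) : (Set.range (w ++ ·)).OrdConnected := by
  refine ⟨?_⟩
  rintro _ ⟨x, rfl⟩ _ ⟨y, rfl⟩ m ⟨hxm, hmy⟩
  induction w generalizing m with
  | nil => exact ⟨m, rfl⟩
  | cons a w ih =>
    cases m with
    | nil => exact absurd (List.nil_lt_cons _ _) hxm.not_gt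
    | cons b m =>
      obtain rfl : a = b := by
        rcases lt_trichotomy a b with hab | hab | hab
        · exact absurd (List.cons_lt_cons_iff.2 (Or.inl hab)) hmy.not_gt
        · exact hab
        · exact absurd (List.cons_lt_cons_iff.2 (Or.inl hab)) hxm.not_gt
      obtain ⟨z, rfl⟩ := ih ((strictMono_append [a]).le_iff_le.1 hxm)
        ((strictMono_append [a]).le_iff_le.1 hmy)
      exact ⟨z, rfl⟩

theorem exists_append_of_mem_uIcc {w x y m : List A} (h : m ∈ Set.uIcc (w ++ x) (w ++ y)) :
    ∃ z ∈ Set.uIcc x y, m = w ++ z := by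
  obtain ⟨z, rfl⟩ :=
    (ordConnected_range_append w).uIcc_subset (Set.mem_range_self x) (Set.mem_range_self y) h
  refine ⟨z, ?_, rfl⟩
  simpa only [Set.mem_uIcc, (strictMono_append w).le_iff_le] using h

theorem exists_append_of_colex_of_colex {x y z w : List A} (hxy : Colex (x ++ w) y)
    (hyz : Colex y (z ++ w)) : ∃ v, y = v ++ w := by
  have hmem : y.reverse ∈ Set.uIcc (x ++ w).reverse (z ++ w).reverse :=
    Set.mem_uIcc_of_le (le_of_lt hxy) (le_of_lt hyz)
  rw [List.reverse_append, List.reverse_append] at hmem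
  obtain ⟨v, -, hv⟩ := exists_append_of_mem_uIcc hmem
  exact ⟨v.reverse, by simpa using congrArg List.reverse hv⟩

theorem head?_eq_of_mem_uIcc {x y m : List A} (hxy : x.head? = y.head?)
    (h : m ∈ Set.uIcc x y) : m.head? = x.head? := by
  rcases x with - | ⟨a, x⟩
  · obtain rfl : y = [] := by simpa using hxy.symm
    obtain rfl : m = [] := by simpa using h
    rfl
  · obtain ⟨y, rfl⟩ := List.head?_eq_some_iff.1 hxy.symm
    obtain ⟨z, -, rfl⟩ := exists_append_of_mem_uIcc (w := [a]) h
    rfl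

theorem getLast?_eq_of_reverse_mem_uIcc {x y m : List A} (hxy : x.getLast? = y.getLast?)
    (h : m.reverse ∈ Set.uIcc x.reverse y.reverse) : m.getLast? = x.getLast? := by
  simp only [List.getLast?_eq_head?_reverse] at hxy ⊢
  exact head?_eq_of_mem_uIcc hxy h

end Colex

section Words

variable {A : Type}

theorem length_wpow (γ : List A) (k : ℕ) : (wpow γ k).length = k * γ.length := by
  induction k with
  | zero => simp [wpow]
  | succ k ih => rw [wpow, List.length_append, ih, Nat.succ_mul, Nat.add_comm]

theorem wpow_add (γ : List A) (j k : ℕ) : wpow γ (j + k) = wpow γ j ++ wpow γ k := by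
  induction j with
  | zero => simp [wpow]
  | succ j ih => rw [Nat.succ_add, wpow, wpow, ih, List.append_assoc]

theorem wpow_succ' (γ : List A) (k : ℕ) : wpow γ (k + 1) = wpow γ k ++ γ := by
  rw [wpow_add, wpow, wpow, List.append_nil]

theorem exists_length_wpow_mem_Ioc {γ : List A} (hγ : γ ≠ []) (m : ℕ) :
    ∃ k, (wpow γ k).length ∈ Set.Ioc m (m + γ.length) := by
  refine ⟨m / γ.length + 1, ?_, ?_⟩
  · rw [length_wpow, mul_comm]
    exact Nat.lt_mul_div_succ m (List.length_pos_iff.2 hγ)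
  · rw [length_wpow, add_mul, one_mul]
    exact Nat.add_le_add_right (Nat.div_mul_le_self m _) _

theorem le_length_take_of_take_eq_of_ne {x y : List A} {k : ℕ} (h : x.take k = y.take k)
    (hxy : x ≠ y) : k ≤ (x.take k).length := by
  by_contra! hlt
  have hx : x.length < k := by simpa using hlt
  have hy : y.length < k := by simpa [h] using hlt
  exact hxy (by rwa [List.take_of_length_le hx.le, List.take_of_length_le hy.le] at h)

theorem exists_append_getLast?_ne {ι : Type*} (x : ι → List A) {i j : ι} (hij : x i ≠ x j) :
    ∃ (x' : ι → List A) (s : List A), (∀ i, x i = x' i ++ s) ∧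
      ∃ i j, (x' i).getLast? ≠ (x' j).getLast? := by
  induction hx : x i using List.reverseRecOn generalizing x with
  | nil =>
    refine ⟨x, [], fun k => (List.append_nil _).symm, i, j, fun hlast => hij ?_⟩
    rw [hx, List.getLast?_nil, eq_comm, List.getLast?_eq_none_iff] at hlast
    rw [hx, hlast]
  | append_singleton l a ih =>
    by_cases hlast : ∀ k, (x k).getLast? = some a
    · choose y hy using fun k => List.getLast?_eq_some_iff.1 (hlast k)
      have hyi : y i = l := List.append_cancel_right ((hy i).symm.trans hx)
      obtain ⟨x', s, hs, hne⟩ := ih y (fun h => hij (by rw [hy, hy, h])) hyi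
      exact ⟨x', s ++ [a], fun k => by rw [hy, hs, List.append_assoc], hne⟩
    · push Not at hlast
      obtain ⟨k, hk⟩ := hlast
      exact ⟨x, [], fun k => (List.append_nil _).symm, k, i, by simpa [hx] using hk⟩

end Words

section Contexts

variable {A : Type} {L : Set (List A)} {α β : List A}

theorem mem_pref_iff_rc_nonempty : α ∈ Pref L ↔ (rc L α).Nonempty := Iff.rfl

theorem mem_iff_nil_mem_rc : α ∈ L ↔ [] ∈ rc L α := by
  simp [rc]

theorem rc_append_congr (h : rc L α = rc L β) (γ : List A) : rc L (α ++ γ) = rc L (β ++ γ) := by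
  ext δ
  simpa [rc] using Set.ext_iff.1 h (γ ++ δ)

theorem mem_pref_of_append_mem_pref (h : α ++ β ∈ Pref L) : α ∈ Pref L := by
  obtain ⟨γ, h⟩ := h
  exact ⟨β ++ γ, by simpa using h⟩

end Contexts

namespace PDFA

section Runs

variable {A Q : Type} (M : PDFA A Q)

theorem evalFrom_append (q : Q) (x y : List A) :
    M.evalFrom q (x ++ y) = (M.evalFrom q x).bind fun q' => M.evalFrom q' y := by
  induction x generalizing q with
  | nil => rfl
  | cons a x ih =>
    simp only [List.cons_append, evalFrom, Option.bind_assoc, ih]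

variable {M}

theorem evalFrom_append_eq_some_iff {q r : Q} {x y : List A} :
    M.evalFrom q (x ++ y) = some r ↔ ∃ p, M.evalFrom q x = some p ∧ M.evalFrom p y = some r := by
  rw [evalFrom_append, Option.bind_eq_some_iff]

theorem evalFrom_append_eq_some {q p r : Q} {x y : List A} (hx : M.evalFrom q x = some p)
    (hy : M.evalFrom p y = some r) : M.evalFrom q (x ++ y) = some r :=
  evalFrom_append_eq_some_iff.2 ⟨p, hx, hy⟩

theorem evalFrom_concat_eq_some_iff {q r : Q} {x : List A} {a : A} :
    M.evalFrom q (x ++ [a]) = some r ↔ ∃ p, M.evalFrom q x = some p ∧ M.trans p a = some r := by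
  simp only [evalFrom_append_eq_some_iff, evalFrom, Option.bind_fun_some]

theorem evalFrom_wpow {q : Q} {γ : List A} (h : M.evalFrom q γ = some q) (k : ℕ) :
    M.evalFrom q (wpow γ k) = some q := by
  induction k with
  | zero => rfl
  | succ k ih => exact evalFrom_append_eq_some h ih

variable (M) in
/-- The right language of the state `q`: the words accepted when the run starts at `q`. -/
def acceptsFrom (q : Q) : Set (List A) :=
  {w | ∃ r, M.evalFrom q w = some r ∧ M.accept r}

theorem acceptsFrom_of_evalFrom {p q : Q} {w : List A} (h : M.evalFrom p w = some q) :
    M.acceptsFrom q = {v | w ++ v ∈ M.acceptsFrom p} := by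
  ext v
  simp [acceptsFrom, evalFrom_append, h]

theorem rc_accepts {q : Q} {α : List A} (h : M.evalFrom M.init α = some q) :
    rc M.accepts α = M.acceptsFrom q :=
  (acceptsFrom_of_evalFrom h).symm

theorem mem_pref_accepts_iff {q : Q} {α : List A} (h : M.evalFrom M.init α = some q) :
    α ∈ Pref M.accepts ↔ (M.acceptsFrom q).Nonempty := by
  rw [mem_pref_iff_rc_nonempty, rc_accepts h]

theorem exists_evalFrom_of_mem_pref {α : List A} (h : α ∈ Pref M.accepts) :
    ∃ q, M.evalFrom M.init α = some q := by
  obtain ⟨β, r, hr, -⟩ := h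
  obtain ⟨q, hq, -⟩ := evalFrom_append_eq_some_iff.1 hr
  exact ⟨q, hq⟩

theorem exists_common_loop [Fintype Q] {ι : Type*} [Fintype ι] {q q' : ι → Q} {s : List A}
    (h : ∀ i, M.evalFrom (q i) s = some (q' i))
    (hs : Fintype.card Q ^ Fintype.card ι ≤ s.length) :
    ∃ (w δ t : List A) (r : ι → Q), s = w ++ δ ++ t ∧ δ ≠ [] ∧
      w.length + δ.length ≤ Fintype.card Q ^ Fintype.card ι ∧
      (∀ i, M.evalFrom (q i) w = some (r i)) ∧ (∀ i, M.evalFrom (r i) δ = some (r i)) ∧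
      ∀ i, M.evalFrom (r i) t = some (q' i) := by
  classical
  set N := Fintype.card Q ^ Fintype.card ι
  have hsplit : ∀ k i, ∃ r, M.evalFrom (q i) (s.take k) = some r ∧
      M.evalFrom r (s.drop k) = some (q' i) := fun k i => by
    rw [← evalFrom_append_eq_some_iff, List.take_append_drop, h]
  choose f hf hf' using hsplit
  obtain ⟨⟨j, hj⟩, ⟨k, hk⟩, hjk, hfjk⟩ :=
    Fintype.exists_ne_map_eq_of_card_lt (fun k : Fin (N + 1) => f k) (by simp [N])
  rw [Ne, Fin.mk.injEq] at hjk
  wlog hlt : j < k generalizing j k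
  · exact this k hk j hj (Ne.symm hjk) hfjk.symm (by omega)
  obtain ⟨d, hd, rfl⟩ : ∃ d, 0 < d ∧ k = j + d := ⟨k - j, by omega, by omega⟩
  have htake : s.take (j + d) = s.take j ++ (s.drop j).take d := List.take_add
  have hfjd : ∀ i, f (j + d) i = f j i := fun i => (congrFun hfjk i).symm
  refine ⟨s.take j, (s.drop j).take d, s.drop (j + d), f j, ?_, ?_, ?_, hf j, ?_, ?_⟩
  · rw [← htake, List.take_append_drop]
  · rw [← List.length_pos_iff, List.length_take, List.length_drop]
    omega
  · rw [List.length_take, List.length_take]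
    omega
  · intro i
    have hrun := hf (j + d) i
    rwa [htake, evalFrom_append, hf, hfjd] at hrun
  · intro i
    rw [← hfjd]
    exact hf' (j + d) i

theorem exists_short_common_run [Fintype Q] {ι : Type*} [Fintype ι] {q q' : ι → Q} (s : List A)
    (h : ∀ i, M.evalFrom (q i) s = some (q' i)) :
    ∃ s', (∀ i, M.evalFrom (q i) s' = some (q' i)) ∧ s'.getLast? = s.getLast? ∧
      s'.length ≤ Fintype.card Q ^ Fintype.card ι := by
  induction hn : s.length using Nat.strong_induction_on generalizing s with
  | _ n ih =>
    by_cases hs : s.length ≤ Fintype.card Q ^ Fintype.card ι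
    · exact ⟨s, h, rfl, hs⟩
    obtain ⟨w, δ, t, r, hwδt, hδ, hwδ, hw, -, ht⟩ := exists_common_loop h (not_le.1 hs).le
    have hlen : s.length = w.length + δ.length + t.length := by simp [hwδt, Nat.add_assoc]
    have hshorter : (w ++ t).length < n := by
      have := List.length_pos_iff.2 hδ
      rw [List.length_append]
      omega
    have ht_ne : t ≠ [] := by
      rw [← List.length_pos_iff]
      omega
    obtain ⟨s', hs', hlast, hs'_len⟩ :=
      ih _ hshorter (w ++ t) (fun i => evalFrom_append_eq_some (hw i) (ht i)) rfl
    refine ⟨s', hs', ?_, hs'_len⟩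
    rw [hlast, hwδt, List.getLast?_append_of_ne_nil _ ht_ne,
      List.getLast?_append_of_ne_nil _ ht_ne]

theorem exists_short_run [Fintype Q] {q q' : Q} {s : List A} (h : M.evalFrom q s = some q') :
    ∃ s', M.evalFrom q s' = some q' ∧ s'.getLast? = s.getLast? ∧
      s'.length ≤ Fintype.card Q := by
  simpa using exists_short_common_run (M := M) (ι := Unit) s fun _ => h

end Runs

end PDFA

section ConvexClasses

variable {A : Type} [LinearOrder A] {L : Set (List A)} {α β γ : List A}

theorem equivC_iff :
    EquivC L α β ↔ rc L α = rc L β ∧ α.getLast? = β.getLast? ∧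
      ∀ γ ∈ Pref L, γ.reverse ∈ Set.uIcc α.reverse β.reverse → rc L γ = rc L α := by
  simp only [EquivC, colexLE_iff_reverse_le, Set.mem_uIcc]

namespace EquivC

theorem refl (L : Set (List A)) (α : List A) : EquivC L α α := by
  refine equivC_iff.2 ⟨rfl, rfl, fun γ _ hγ => ?_⟩
  rw [Set.uIcc_self, Set.mem_singleton_iff, List.reverse_inj] at hγ
  rw [hγ]

theorem symm (h : EquivC L α β) : EquivC L β α := by
  obtain ⟨hrc, hlast, hconvex⟩ := equivC_iff.1 h
  refine equivC_iff.2 ⟨hrc.symm, hlast.symm, fun γ hγ hmem => ?_⟩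
  rw [hconvex γ hγ (Set.uIcc_comm α.reverse _ ▸ hmem), hrc]

theorem trans (h : EquivC L α β) (h' : EquivC L β γ) : EquivC L α γ := by
  obtain ⟨hrc, hlast, hconvex⟩ := equivC_iff.1 h
  obtain ⟨hrc', hlast', hconvex'⟩ := equivC_iff.1 h'
  refine equivC_iff.2 ⟨hrc.trans hrc', hlast.trans hlast', fun δ hδ hmem => ?_⟩
  rcases Set.uIcc_subset_uIcc_union_uIcc hmem with hmem | hmem
  · exact hconvex δ hδ hmem
  · rw [hconvex' δ hδ hmem, hrc]

theorem of_mem_uIcc (h : EquivC L α β) (hγ : γ ∈ Pref L)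
    (hmem : γ.reverse ∈ Set.uIcc α.reverse β.reverse) : EquivC L α γ := by
  obtain ⟨-, hlast, hconvex⟩ := equivC_iff.1 h
  exact equivC_iff.2 ⟨(hconvex γ hγ hmem).symm, (getLast?_eq_of_reverse_mem_uIcc hlast hmem).symm,
    fun δ hδ hδmem => hconvex δ hδ (Set.uIcc_subset_uIcc_left hmem hδmem)⟩

theorem append_right (h : EquivC L α β) (w : List A) : EquivC L (α ++ w) (β ++ w) := by
  obtain ⟨hrc, hlast, hconvex⟩ := equivC_iff.1 h
  refine equivC_iff.2 ⟨rc_append_congr hrc w, by simp [List.getLast?_append, hlast],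
    fun γ hγ hmem => ?_⟩
  rw [List.reverse_append, List.reverse_append] at hmem
  obtain ⟨δ, hδ, hγδ⟩ := exists_append_of_mem_uIcc hmem
  obtain rfl : γ = δ.reverse ++ w := by simpa using congrArg List.reverse hγδ
  exact rc_append_congr (hconvex _ (mem_pref_of_append_mem_pref hγ) (by simpa using hδ)) w

theorem mem_iff (h : EquivC L α β) : α ∈ L ↔ β ∈ L := by
  rw [mem_iff_nil_mem_rc, h.1, ← mem_iff_nil_mem_rc]

theorem mem_pref_iff (h : EquivC L α β) : α ∈ Pref L ↔ β ∈ Pref L := by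
  rw [mem_pref_iff_rc_nonempty, h.1, ← mem_pref_iff_rc_nonempty]

end EquivC

theorem exists_between_of_not_equivC (h : ¬ EquivC L α β) (hrc : rc L α = rc L β)
    (hlast : α.getLast? = β.getLast?) (hαβ : Colex α β) :
    ∃ γ ∈ Pref L, Colex α γ ∧ Colex γ β ∧ rc L γ ≠ rc L α := by
  by_contra! hconvex
  refine h (equivC_iff.2 ⟨hrc, hlast, fun γ hγ hmem => ?_⟩)
  rw [Set.uIcc_of_le (le_of_lt hαβ)] at hmem
  rcases colexLE_iff_reverse_le.2 hmem.1 with hαγ | rfl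
  · rcases colexLE_iff_reverse_le.2 hmem.2 with hγβ | rfl
    · exact hconvex γ hγ hαγ hγβ
    · exact hrc.symm
  · rfl

variable (L) in
/-- The input-consistent convex equivalence `≡^c_L`, restricted to the prefixes of `L`. -/
def convexSetoid : Setoid (Pref L) where
  r α β := EquivC L α β
  iseqv := ⟨fun α => EquivC.refl L α, EquivC.symm, EquivC.trans⟩

variable (L) in
/-- The classes of `≡^c_L` on `Pref L`; they are the states of the canonical Wheeler DFA of `L`. -/
abbrev ConvexClass : Type := Quotient (convexSetoid L)

namespace ConvexClass

/-- The `≡^c_L`-class of a prefix of `L`. -/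
def mk (α : List A) (hα : α ∈ Pref L) : ConvexClass L := Quotient.mk _ ⟨α, hα⟩

/-- A chosen representative of a `≡^c_L`-class. -/
noncomputable def rep (c : ConvexClass L) : List A := (Quotient.out c).1

theorem rep_mem_pref (c : ConvexClass L) : c.rep ∈ Pref L := (Quotient.out c).2

theorem mk_eq_mk {hα : α ∈ Pref L} {hβ : β ∈ Pref L} : mk α hα = mk β hβ ↔ EquivC L α β :=
  Quotient.eq

@[simp]
theorem mk_rep (c : ConvexClass L) : mk c.rep c.rep_mem_pref = c := Quotient.out_eq c

theorem equivC_rep_mk (hα : α ∈ Pref L) : EquivC L (mk α hα).rep α :=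
  mk_eq_mk.1 (mk_rep (mk α hα))

theorem rep_injective : Function.Injective (rep : ConvexClass L → List A) :=
  fun _ _ h => Quotient.out_injective (Subtype.ext h)

theorem rep_mk_colex_or_eq (h : Colex α β) (hα : α ∈ Pref L) (hβ : β ∈ Pref L) :
    Colex (mk α hα).rep (mk β hβ).rep ∨ mk α hα = mk β hβ := by
  refine or_iff_not_imp_left.2 fun hlt => ?_
  set x := (mk α hα).rep
  set y := (mk β hβ).rep
  have hx : EquivC L x α := equivC_rep_mk hα
  have hy : EquivC L y β := equivC_rep_mk hβ
  have hyx : y.reverse ≤ x.reverse := not_lt.1 hlt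
  have hαβ : α.reverse ≤ β.reverse := le_of_lt h
  rw [mk_eq_mk]
  rcases le_total y.reverse α.reverse with hyα | hαy
  · exact (hy.of_mem_uIcc hα (Set.mem_uIcc_of_le hyα hαβ)).symm.trans hy
  · have hyα : EquivC L α y :=
      hx.symm.of_mem_uIcc (rep_mem_pref _) (Set.mem_uIcc_of_le hαy hyx)
    exact hyα.trans hy

end ConvexClass

end ConvexClasses

section ConvexDFA

variable {A : Type} [LinearOrder A] {L : Set (List A)}

open Classical in
variable (L) in
/-- The canonical DFA on the `≡^c_L`-classes, reading a letter by appending it to the chosen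
representative; it is partial because its states are classes of prefixes of `L` only. -/
noncomputable def convexDFA (hL : L.Nonempty) : PDFA A (ConvexClass L) where
  init := .mk [] hL
  trans c a := if h : c.rep ++ [a] ∈ Pref L then some (.mk _ h) else none
  accept c := c.rep ∈ L

variable {hL : L.Nonempty}

theorem convexDFA_trans_eq_some_iff {c d : ConvexClass L} {a : A} :
    (convexDFA L hL).trans c a = some d ↔ ∃ h : c.rep ++ [a] ∈ Pref L, .mk _ h = d := by
  simp [convexDFA]

theorem convexDFA_evalFrom_init_eq_some_iff {α : List A} {c : ConvexClass L} :
    (convexDFA L hL).evalFrom (convexDFA L hL).init α = some c ↔ ∃ h : α ∈ Pref L, .mk α h = c := by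
  induction α using List.reverseRecOn generalizing c with
  | nil => simp [PDFA.evalFrom, convexDFA, exists_prop_of_true (show [] ∈ Pref L from hL)]
  | append_singleton α a ih =>
    simp only [PDFA.evalFrom_concat_eq_some_iff, ih, convexDFA_trans_eq_some_iff]
    have hrep : ∀ hα : α ∈ Pref L,
        EquivC L ((ConvexClass.mk α hα).rep ++ [a]) (α ++ [a]) :=
      fun hα => (ConvexClass.equivC_rep_mk hα).append_right [a]
    constructor
    · rintro ⟨_, ⟨hα, rfl⟩, h, rfl⟩
      exact ⟨(hrep hα).mem_pref_iff.1 h, ConvexClass.mk_eq_mk.2 (hrep hα).symm⟩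
    · rintro ⟨h, rfl⟩
      have hα := mem_pref_of_append_mem_pref h
      exact ⟨_, ⟨hα, rfl⟩, (hrep hα).mem_pref_iff.2 h, ConvexClass.mk_eq_mk.2 (hrep hα)⟩

theorem accepts_convexDFA : (convexDFA L hL).accepts = L := by
  ext α
  simp only [PDFA.accepts, convexDFA_evalFrom_init_eq_some_iff, Set.mem_ofPred_eq]
  constructor
  · rintro ⟨_, ⟨hα, rfl⟩, h⟩
    exact (ConvexClass.equivC_rep_mk hα).mem_iff.1 h
  · intro h
    have hα : α ∈ Pref L := ⟨[], by simpa using h⟩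
    exact ⟨_, ⟨hα, rfl⟩, (ConvexClass.equivC_rep_mk hα).mem_iff.2 h⟩

theorem isWheelerOrder_convexDFA :
    IsWheelerOrder (convexDFA L hL) fun c d => Colex c.rep d.rep := by
  have hlast : ∀ {c a d}, (convexDFA L hL).trans c a = some d → d.rep.getLast? = some a := by
    intro c a d h
    obtain ⟨hca, rfl⟩ := convexDFA_trans_eq_some_iff.1 h
    rw [(ConvexClass.equivC_rep_mk hca).2.1, List.getLast?_concat]
  have hinit : (convexDFA L hL).init.rep = [] := by
    have := (ConvexClass.equivC_rep_mk (L := L) (α := []) hL).2.1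
    rwa [List.getLast?_nil, List.getLast?_eq_none_iff] at this
  refine ⟨(RelEmbedding.preimage ⟨_, ConvexClass.rep_injective⟩ Colex).isStrictTotalOrder,
    fun c hc => ?_, fun c a h => ?_, fun c a c' d b d' h h' => ⟨fun hab => ?_, ?_⟩⟩
  · beta_reduce
    rw [hinit]
    refine (trichotomous_of Colex [] c.rep).resolve_right (not_or.2 ⟨fun h => hc ?_, ?_⟩)
    · exact ConvexClass.rep_injective (h.symm.trans hinit.symm)
    · exact List.not_lt_nil _
  · simpa [hinit] using hlast h
  · beta_reduce
    rw [colex_iff_getLast?_lt] <;> simp [hlast h, hlast h', hab, hab.ne]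
  · rintro rfl hcd
    obtain ⟨hc, rfl⟩ := convexDFA_trans_eq_some_iff.1 h
    obtain ⟨hd, rfl⟩ := convexDFA_trans_eq_some_iff.1 h'
    exact ConvexClass.rep_mk_colex_or_eq ((colex_append_right_iff _).2 hcd) hc hd

end ConvexDFA

section MapStates

variable {A Q R : Type}

/-- The automaton `M` with its states renamed along `e`. -/
def PDFA.mapStates (M : PDFA A Q) (e : Q ≃ R) : PDFA A R where
  init := e M.init
  trans r a := (M.trans (e.symm r) a).map e
  accept r := M.accept (e.symm r)

theorem PDFA.evalFrom_mapStates (M : PDFA A Q) (e : Q ≃ R) (q : Q) (w : List A) :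
    (M.mapStates e).evalFrom (e q) w = (M.evalFrom q w).map e := by
  induction w generalizing q with
  | nil => rfl
  | cons a w ih =>
    simp only [evalFrom, mapStates, Equiv.symm_apply_apply, Option.bind_map, Option.map_bind]
    exact Option.bind_congr fun p _ => ih p

theorem PDFA.accepts_mapStates (M : PDFA A Q) (e : Q ≃ R) :
    (M.mapStates e).accepts = M.accepts := by
  ext w
  have hrun : (M.mapStates e).evalFrom (M.mapStates e).init w = (M.evalFrom M.init w).map e :=
    M.evalFrom_mapStates e M.init w
  simp only [accepts, Set.mem_ofPred_eq, hrun, Option.map_eq_some_iff]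
  constructor
  · rintro ⟨_, ⟨q, hq, rfl⟩, haccept⟩
    exact ⟨q, hq, by simpa [mapStates] using haccept⟩
  · rintro ⟨q, hq, haccept⟩
    exact ⟨e q, ⟨q, hq, rfl⟩, by simpa [mapStates] using haccept⟩

variable [LinearOrder A]

theorem IsWheelerOrder.mapStates {M : PDFA A Q} {r : Q → Q → Prop} (h : IsWheelerOrder M r)
    (e : Q ≃ R) : IsWheelerOrder (M.mapStates e) fun p q => r (e.symm p) (e.symm q) := by
  obtain ⟨hr, hmin, hinit, htrans⟩ := h
  have htrans_iff : ∀ {p a q}, (M.mapStates e).trans p a = some q ↔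
      M.trans (e.symm p) a = some (e.symm q) := fun {p a q} => by
    rw [PDFA.mapStates, ← Option.map_injective e.injective |>.eq_iff]
    simp
  refine ⟨(RelEmbedding.preimage e.symm.toEmbedding r).isStrictTotalOrder, fun q hq => ?_,
    fun q a hqa => ?_, fun p a p' q b q' hp hq => ?_⟩
  · simpa [PDFA.mapStates] using hmin (e.symm q) (by rwa [Ne, e.symm_apply_eq])
  · exact hinit _ a (by simpa [PDFA.mapStates] using htrans_iff.1 hqa)
  · simpa using htrans _ _ _ _ _ _ (htrans_iff.1 hp) (htrans_iff.1 hq)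

theorem IsWheelerOrder.isWheelerLang [Finite Q] {M : PDFA A Q} {r : Q → Q → Prop}
    (h : IsWheelerOrder M r) : IsWheelerLang M.accepts :=
  have ⟨n, ⟨e⟩⟩ := Finite.exists_equiv_fin Q
  ⟨n, M.mapStates e, _, h.mapStates e, M.accepts_mapStates e⟩

theorem isWheelerLang_empty : IsWheelerLang (∅ : Set (List A)) :=
  ⟨1, ⟨0, fun _ _ => none, fun _ => False⟩, (· < ·),
    ⟨inferInstance, fun q hq => absurd (Subsingleton.elim _ _) hq, by simp, by simp⟩,
    by simp [PDFA.accepts]⟩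

end MapStates

section MyhillNerode

variable {A Q : Type} [LinearOrder A] {M : PDFA A Q} {r : Q → Q → Prop}

namespace IsWheelerOrder

theorem getLast?_eq_of_evalFrom_eq (h : IsWheelerOrder M r) {α β : List A} {q : Q}
    (hα : M.evalFrom M.init α = some q) (hβ : M.evalFrom M.init β = some q) :
    α.getLast? = β.getLast? := by
  obtain ⟨hr, -, hinit, htrans⟩ := h
  have hnil : ∀ {γ : List A}, M.evalFrom M.init γ = some M.init → γ = [] := fun {γ} hγ => by
    rcases List.eq_nil_or_concat' γ with rfl | ⟨γ, a, rfl⟩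
    · rfl
    · obtain ⟨p, -, hp⟩ := PDFA.evalFrom_concat_eq_some_iff.1 hγ
      exact absurd hp (hinit p a)
  rcases List.eq_nil_or_concat' α with rfl | ⟨α, a, rfl⟩
  · obtain rfl : M.init = q := by simpa [PDFA.evalFrom] using hα
    rw [hnil hβ]
  rcases List.eq_nil_or_concat' β with rfl | ⟨β, b, rfl⟩
  · obtain rfl : M.init = q := by simpa [PDFA.evalFrom] using hβ
    rw [hnil hα]
  obtain ⟨p, -, hp⟩ := PDFA.evalFrom_concat_eq_some_iff.1 hα
  obtain ⟨p', -, hp'⟩ := PDFA.evalFrom_concat_eq_some_iff.1 hβ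
  rw [List.getLast?_concat, List.getLast?_concat, Option.some_inj]
  rcases lt_trichotomy a b with hab | hab | hab
  · exact absurd ((htrans _ _ _ _ _ _ hp hp').1 hab) (irrefl_of r q)
  · exact hab
  · exact absurd ((htrans _ _ _ _ _ _ hp' hp).1 hab) (irrefl_of r q)

theorem evalFrom_monotone (h : IsWheelerOrder M r) {α β : List A} {p q : Q} (hαβ : Colex α β)
    (hα : M.evalFrom M.init α = some p) (hβ : M.evalFrom M.init β = some q) :
    r p q ∨ p = q := by
  obtain ⟨-, hmin, -, htrans⟩ := h
  induction α using List.reverseRecOn generalizing β p q with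
  | nil =>
    obtain rfl : M.init = p := by simpa [PDFA.evalFrom] using hα
    exact or_iff_not_imp_right.2 fun hq => hmin q (Ne.symm hq)
  | append_singleton α a ih =>
    rcases List.eq_nil_or_concat' β with rfl | ⟨β, b, rfl⟩
    · exact absurd hαβ (List.not_lt_nil _)
    obtain ⟨p', hp', hpa⟩ := PDFA.evalFrom_concat_eq_some_iff.1 hα
    obtain ⟨q', hq', hqb⟩ := PDFA.evalFrom_concat_eq_some_iff.1 hβ
    obtain hab | ⟨rfl, hcolex⟩ : a < b ∨ a = b ∧ Colex α β := by
      simpa [colex_iff_reverse_lt, List.cons_lt_cons_iff] using hαβ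
    · exact Or.inl ((htrans _ _ _ _ _ _ hpa hqb).1 hab)
    · rcases ih hcolex hp' hq' with hpq' | rfl
      · exact (htrans _ _ _ _ _ _ hpa hqb).2 rfl hpq'
      · exact Or.inr (Option.some_inj.1 (hpa.symm.trans hqb))

theorem equivC_of_evalFrom_eq (h : IsWheelerOrder M r) {α β : List A} {q : Q}
    (hα : M.evalFrom M.init α = some q) (hβ : M.evalFrom M.init β = some q) :
    EquivC M.accepts α β := by
  refine ⟨by rw [PDFA.rc_accepts hα, PDFA.rc_accepts hβ], h.getLast?_eq_of_evalFrom_eq hα hβ,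
    fun γ hγ hmem => ?_⟩
  obtain ⟨p, hp⟩ := PDFA.exists_evalFrom_of_mem_pref hγ
  have hmono : ∀ {x y : List A} {s t : Q}, ColexLE x y → M.evalFrom M.init x = some s →
      M.evalFrom M.init y = some t → r s t ∨ s = t := by
    rintro x y s t (hxy | rfl) hx hy
    · exact h.evalFrom_monotone hxy hx hy
    · exact Or.inr (Option.some_inj.1 (hx.symm.trans hy))
  have := h.1
  obtain rfl : q = p := by
    by_contra hne
    rcases hmem with ⟨hαγ, hγβ⟩ | ⟨hβγ, hγα⟩
    · exact asymm_of r ((hmono hαγ hα hp).resolve_right hne)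
        ((hmono hγβ hp hβ).resolve_right (Ne.symm hne))
    · exact asymm_of r ((hmono hβγ hβ hp).resolve_right hne)
        ((hmono hγα hp hα).resolve_right (Ne.symm hne))
  rw [PDFA.rc_accepts hα, PDFA.rc_accepts hp]

theorem finite_convexClass [Finite Q] (h : IsWheelerOrder M r) :
    Finite (ConvexClass M.accepts) := by
  choose f hf using fun c : ConvexClass M.accepts => PDFA.exists_evalFrom_of_mem_pref c.rep_mem_pref
  refine Finite.of_injective f fun c d hcd => ?_
  rw [← c.mk_rep, ← d.mk_rep, ConvexClass.mk_eq_mk]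
  exact h.equivC_of_evalFrom_eq (hf c) (hcd ▸ hf d)

end IsWheelerOrder

theorem isWheelerLang_iff_finite_convexClass {L : Set (List A)} :
    IsWheelerLang L ↔ Finite (ConvexClass L) := by
  constructor
  · rintro ⟨n, M, r, h, rfl⟩
    exact h.finite_convexClass
  · intro hfin
    rcases L.eq_empty_or_nonempty with rfl | hL
    · exact isWheelerLang_empty
    · rw [← accepts_convexDFA (hL := hL)]
      exact isWheelerOrder_convexDFA.isWheelerLang

end MyhillNerode

namespace PDFA

section Witness

variable {A Q : Type} [LinearOrder A] {M : PDFA A Q} {μ ν γ : List A} {u v : Q}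

/-- A witness of non-Wheelerness: `μ` and `ν` lead to inequivalent states `u` and `v` that both
carry a loop labelled `γ`, and they lie on the same side of `γ`. Having `μ` and `ν` be prefixes
of the language takes the place of requiring `M` to be trim. -/
structure IsNonWheelerWitness (M : PDFA A Q) (μ ν γ : List A) (u v : Q) : Prop where
  not_suffix_left : ¬ γ <:+ μ
  not_suffix_right : ¬ γ <:+ ν
  evalFrom_left : M.evalFrom M.init μ = some u
  evalFrom_right : M.evalFrom M.init ν = some v
  mem_pref_left : μ ∈ Pref M.accepts
  mem_pref_right : ν ∈ Pref M.accepts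
  rc_ne : rc M.accepts μ ≠ rc M.accepts ν
  loop_left : M.evalFrom u γ = some u
  loop_right : M.evalFrom v γ = some v
  same_side : (Colex μ γ ∧ Colex ν γ) ∨ (Colex γ μ ∧ Colex γ ν)

theorem isNonWheelerWitness_iff (hM : ∀ q, ∃ α q', M.evalFrom q α = some q' ∧ M.accept q') :
    M.IsNonWheelerWitness μ ν γ u v ↔
      ¬ γ <:+ μ ∧ ¬ γ <:+ ν ∧
        M.evalFrom M.init μ = some u ∧ M.evalFrom M.init ν = some v ∧
        rc M.accepts μ ≠ rc M.accepts ν ∧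
        M.evalFrom u γ = some u ∧ M.evalFrom v γ = some v ∧
        ((Colex μ γ ∧ Colex ν γ) ∨ (Colex γ μ ∧ Colex γ ν)) := by
  constructor
  · rintro ⟨hμ, hν, hu, hv, -, -, hne, hu_loop, hv_loop, hside⟩
    exact ⟨hμ, hν, hu, hv, hne, hu_loop, hv_loop, hside⟩
  · rintro ⟨hμ, hν, hu, hv, hne, hu_loop, hv_loop, hside⟩
    exact ⟨hμ, hν, hu, hv, (mem_pref_accepts_iff hu).2 (hM u), (mem_pref_accepts_iff hv).2 (hM v),
      hne, hu_loop, hv_loop, hside⟩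

namespace IsNonWheelerWitness

theorem symm (h : M.IsNonWheelerWitness μ ν γ u v) : M.IsNonWheelerWitness ν μ γ v u :=
  ⟨h.not_suffix_right, h.not_suffix_left, h.evalFrom_right, h.evalFrom_left, h.mem_pref_right,
    h.mem_pref_left, h.rc_ne.symm, h.loop_right, h.loop_left, h.same_side.imp And.symm And.symm⟩

theorem evalFrom_left_wpow (h : M.IsNonWheelerWitness μ ν γ u v) (k : ℕ) :
    M.evalFrom M.init (μ ++ wpow γ k) = some u :=
  evalFrom_append_eq_some h.evalFrom_left (evalFrom_wpow h.loop_left k)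

theorem left_wpow_mem_pref (h : M.IsNonWheelerWitness μ ν γ u v) (k : ℕ) :
    μ ++ wpow γ k ∈ Pref M.accepts := by
  rw [mem_pref_accepts_iff (h.evalFrom_left_wpow k), ← mem_pref_accepts_iff h.evalFrom_left]
  exact h.mem_pref_left

theorem right_wpow_mem_uIcc (h : M.IsNonWheelerWitness μ ν γ u v)
    (hside : (Colex μ ν ∧ Colex ν γ) ∨ (Colex ν μ ∧ Colex γ ν)) {i j : ℕ} (hij : i < j) :
    (ν ++ wpow γ i).reverse ∈ Set.uIcc (μ ++ wpow γ i).reverse (μ ++ wpow γ j).reverse := by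
  obtain ⟨d, rfl⟩ := Nat.exists_eq_add_of_lt hij
  have hpump : μ ++ wpow γ (i + d + 1) = (μ ++ wpow γ d ++ γ) ++ wpow γ i := by
    rw [add_assoc, add_comm, wpow_add, wpow_succ', ← List.append_assoc, ← List.append_assoc]
  rw [hpump]
  rcases hside with ⟨hμν, hνγ⟩ | ⟨hνμ, hγν⟩
  · have hνpump : Colex ν (μ ++ wpow γ d ++ γ) := colex_append_of_colex hνγ _
    exact Set.mem_uIcc_of_le (le_of_lt ((colex_append_right_iff _).2 hμν))
      (le_of_lt ((colex_append_right_iff _).2 hνpump))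
  · have hpumpν : Colex (μ ++ wpow γ d ++ γ) ν :=
      append_colex_of_colex_of_not_suffix hγν h.not_suffix_right _
    exact Set.mem_uIcc_of_ge (le_of_lt ((colex_append_right_iff _).2 hpumpν))
      (le_of_lt ((colex_append_right_iff _).2 hνμ))

theorem not_finite_convexClass (h : M.IsNonWheelerWitness μ ν γ u v) :
    ¬ Finite (ConvexClass M.accepts) := by
  intro hfin
  wlog hside : (Colex μ ν ∧ Colex ν γ) ∨ (Colex ν μ ∧ Colex γ ν) generalizing μ ν u v
  · refine this h.symm (by_contra fun hside' => h.rc_ne ?_)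
    rcases trichotomous_of Colex μ ν with hlt | heq | hgt
    · have := h.same_side
      tauto
    · rw [heq]
    · have := h.same_side
      tauto
  obtain ⟨i, j, hij, heq⟩ := Finite.exists_ne_map_eq_of_infinite
    fun k => ConvexClass.mk (μ ++ wpow γ k) (h.left_wpow_mem_pref k)
  wlog hlt : i < j generalizing i j
  · exact this j i hij.symm heq.symm (by omega)
  have hequiv := ConvexClass.mk_eq_mk.1 heq
  have hrc := (hequiv.of_mem_uIcc (h.symm.left_wpow_mem_pref i) (h.right_wpow_mem_uIcc hside hlt)).1
  rw [rc_accepts (h.evalFrom_left_wpow i), rc_accepts (h.symm.evalFrom_left_wpow i),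
    ← rc_accepts h.evalFrom_left, ← rc_accepts h.evalFrom_right] at hrc
  exact h.rc_ne hrc

end IsNonWheelerWitness

end Witness

end PDFA

namespace PDFA

section Alternation

variable {A Q : Type} [LinearOrder A] {M : PDFA A Q}

/-- Three words in co-lexicographic order leading to states with non-empty right languages, the
middle one of which differs from the other two. It arises when the words of a Myhill–Nerode class
do not form an interval, but `s 0` and `s 2` need not be equivalent: this is what makes the notion
stable under cutting off a common suffix of the words. -/
structure IsAlternating (M : PDFA A Q) (x : Fin 3 → List A) (s : Fin 3 → Q) : Prop where
  colex_zero_one : Colex (x 0) (x 1)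
  colex_one_two : Colex (x 1) (x 2)
  evalFrom_eq : ∀ i, M.evalFrom M.init (x i) = some (s i)
  acceptsFrom_nonempty : ∀ i, (M.acceptsFrom (s i)).Nonempty
  acceptsFrom_zero_ne_one : M.acceptsFrom (s 0) ≠ M.acceptsFrom (s 1)
  acceptsFrom_one_ne_two : M.acceptsFrom (s 1) ≠ M.acceptsFrom (s 2)

theorem IsAlternating.of_append {x : Fin 3 → List A} {w : List A} {s p : Fin 3 → Q}
    (h : M.IsAlternating (fun i => x i ++ w) s) (hx : ∀ i, M.evalFrom M.init (x i) = some (p i)) :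
    M.IsAlternating x p := by
  have hw : ∀ i, M.evalFrom (p i) w = some (s i) := fun i => by
    simpa [evalFrom_append, hx] using h.evalFrom_eq i
  have hs : ∀ i, M.acceptsFrom (s i) = {v | w ++ v ∈ M.acceptsFrom (p i)} :=
    fun i => acceptsFrom_of_evalFrom (hw i)
  refine ⟨(colex_append_right_iff w).1 h.colex_zero_one,
    (colex_append_right_iff w).1 h.colex_one_two, hx, fun i => ?_,
    fun hp => h.acceptsFrom_zero_ne_one ?_, fun hp => h.acceptsFrom_one_ne_two ?_⟩
  · obtain ⟨v, hv⟩ := h.acceptsFrom_nonempty i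
    rw [hs] at hv
    exact ⟨w ++ v, hv⟩
  · rw [hs, hs, hp]
  · rw [hs, hs, hp]

theorem exists_common_suffix_not_equivC [Finite A] [Finite Q] [Infinite (ConvexClass M.accepts)]
    (K : ℕ) : ∃ (α β w : List A) (q : Q), K ≤ w.length ∧
      M.evalFrom M.init (α ++ w) = some q ∧ M.evalFrom M.init (β ++ w) = some q ∧
      α ++ w ∈ Pref M.accepts ∧ ¬ EquivC M.accepts (α ++ w) (β ++ w) := by
  choose state hstate using
    fun c : ConvexClass M.accepts => exists_evalFrom_of_mem_pref c.rep_mem_pref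
  have : Finite {l : List A // l.length ≤ K} := List.finite_length_le A K
  obtain ⟨c, d, hcd, heq⟩ := Finite.exists_ne_map_eq_of_infinite
    fun c : ConvexClass M.accepts =>
      (state c, (⟨c.rep.reverse.take K, List.length_take_le _ _⟩ : {l : List A // l.length ≤ K}))
  obtain ⟨hq, htake⟩ : state c = state d ∧ c.rep.reverse.take K = d.rep.reverse.take K := by
    simpa using heq
  have hsplit : ∀ α : List A,
      (α.reverse.drop K).reverse ++ (α.reverse.take K).reverse = α := fun α => by
    rw [← List.reverse_append, List.take_append_drop, List.reverse_reverse]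
  have hd := hsplit d.rep
  rw [← htake] at hd
  refine ⟨(c.rep.reverse.drop K).reverse, (d.rep.reverse.drop K).reverse,
    (c.rep.reverse.take K).reverse, state c, ?_, ?_, ?_, ?_, ?_⟩
  · rw [List.length_reverse]
    exact le_length_take_of_take_eq_of_ne htake
      fun h => hcd (ConvexClass.rep_injective (List.reverse_injective h))
  · rw [hsplit, hstate]
  · rw [hd, hstate, hq]
  · rw [hsplit]
    exact c.rep_mem_pref
  · rw [hsplit, hd, ← ConvexClass.mk_eq_mk (hα := c.rep_mem_pref) (hβ := d.rep_mem_pref),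
      c.mk_rep, d.mk_rep]
    exact hcd

theorem exists_isAlternating_append [Finite A] [Finite Q] [Infinite (ConvexClass M.accepts)]
    {K : ℕ} (hK : 0 < K) : ∃ (x : Fin 3 → List A) (w : List A) (s : Fin 3 → Q),
      K ≤ w.length ∧ M.IsAlternating (fun i => x i ++ w) s := by
  obtain ⟨α, β, w, q, hw, hα, hβ, hpref, hnot⟩ := exists_common_suffix_not_equivC (M := M) K
  have hne : α ++ w ≠ β ++ w := fun h => hnot (h ▸ EquivC.refl _ _)
  wlog hlt : Colex (α ++ w) (β ++ w) generalizing α β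
  · refine this β α hβ hα ?_ (fun h => hnot h.symm) hne.symm ?_
    · rwa [mem_pref_accepts_iff hβ, ← mem_pref_accepts_iff hα]
    · exact ((trichotomous_of Colex _ _).resolve_left hlt).resolve_left hne
  have hlast : (α ++ w).getLast? = (β ++ w).getLast? := by
    have hw_ne : w ≠ [] := List.length_pos_iff.1 (hK.trans_le hw)
    rw [List.getLast?_append_of_ne_nil _ hw_ne, List.getLast?_append_of_ne_nil _ hw_ne]
  obtain ⟨_, hγ, hαγ, hγβ, hγrc⟩ :=
    exists_between_of_not_equivC hnot (by rw [rc_accepts hα, rc_accepts hβ]) hlast hlt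
  obtain ⟨γ, rfl⟩ := exists_append_of_colex_of_colex hαγ hγβ
  obtain ⟨p, hp⟩ := exists_evalFrom_of_mem_pref hγ
  rw [rc_accepts hα, rc_accepts hp] at hγrc
  rw [mem_pref_accepts_iff hα] at hpref
  rw [mem_pref_accepts_iff hp] at hγ
  refine ⟨![α, γ, β], w, ![q, p, q], hw, hαγ, hγβ, ?_, ?_, hγrc.symm, hγrc⟩
  · simp [Fin.forall_fin_succ, hα, hp, hβ]
  · simp [Fin.forall_fin_succ, hpref, hγ]

/-- Cutting off the longest common suffix of `x` and `y` leaves two words with distinct last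
letters, whose order survives any shortening that keeps these letters. -/
theorem exists_short_colex [Fintype Q] {x y : List A} {p q : Q}
    (hx : M.evalFrom M.init x = some p) (hy : M.evalFrom M.init y = some q) (hxy : Colex x y) :
    ∃ x' y', M.evalFrom M.init x' = some p ∧ M.evalFrom M.init y' = some q ∧ Colex x' y' ∧
      x'.getLast? = x.getLast? ∧ y'.getLast? = y.getLast? ∧
      x'.length ≤ Fintype.card Q ^ 2 + Fintype.card Q ∧
      y'.length ≤ Fintype.card Q ^ 2 + Fintype.card Q := by
  have hne : ![x, y] 0 ≠ ![x, y] 1 := ne_of_irrefl (r := Colex) hxy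
  obtain ⟨z, t, hzt, hlast⟩ := exists_append_getLast?_ne ![x, y] hne
  have hsplit : ∀ k, ∃ r, M.evalFrom M.init (z k) = some r ∧ M.evalFrom r t = some (![p, q] k) := by
    simp only [← evalFrom_append_eq_some_iff, ← hzt, Fin.forall_fin_two]
    exact ⟨hx, hy⟩
  choose r hr hrt using hsplit
  choose z' hz' hz'_last hz'_len using fun k => exists_short_run (hr k)
  obtain ⟨t', ht', ht'_last, ht'_len⟩ := exists_short_common_run t hrt
  have hlast₀₁ : (z 0).getLast? ≠ (z 1).getLast? := by
    simpa [Fin.exists_fin_two, eq_comm] using hlast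
  have hcolex : Colex (z' 0 ++ t') (z' 1 ++ t') := by
    rw [colex_append_right_iff, colex_congr_getLast? hlast₀₁ (hz'_last 0) (hz'_last 1),
      ← colex_append_right_iff t, ← hzt, ← hzt]
    exact hxy
  have hlast_eq : ∀ k, (z' k ++ t').getLast? = (![x, y] k).getLast? := fun k => by
    rw [hzt, List.getLast?_append, List.getLast?_append, ht'_last, hz'_last]
  have hlen : ∀ k, (z' k ++ t').length ≤ Fintype.card Q ^ 2 + Fintype.card Q := fun k => by
    rw [List.length_append, add_comm]
    exact Nat.add_le_add (by simpa using ht'_len) (hz'_len k)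
  exact ⟨z' 0 ++ t', z' 1 ++ t', evalFrom_append_eq_some (hz' 0) (ht' 0),
    evalFrom_append_eq_some (hz' 1) (ht' 1), hcolex, hlast_eq 0, hlast_eq 1, hlen 0, hlen 1⟩

theorem exists_short_colex_triple [Fintype Q] {x : Fin 3 → List A} {p : Fin 3 → Q}
    (hx : ∀ i, M.evalFrom M.init (x i) = some (p i)) (h₀₁ : Colex (x 0) (x 1))
    (h₁₂ : Colex (x 1) (x 2)) (hlast : ∃ i j, (x i).getLast? ≠ (x j).getLast?) :
    ∃ x' : Fin 3 → List A, (∀ i, M.evalFrom M.init (x' i) = some (p i)) ∧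
      Colex (x' 0) (x' 1) ∧ Colex (x' 1) (x' 2) ∧
      ∀ i, (x' i).length ≤ Fintype.card Q ^ 2 + Fintype.card Q := by
  obtain h | h : (x 0).getLast? ≠ (x 1).getLast? ∨ (x 1).getLast? ≠ (x 2).getLast? := by
    by_contra! h
    obtain ⟨i, j, hij⟩ := hlast
    fin_cases i <;> fin_cases j <;> simp_all
  · obtain ⟨y₀, hy₀, hy₀_last, hy₀_len⟩ := exists_short_run (hx 0)
    obtain ⟨y₁, y₂, hy₁, hy₂, hy₁₂, hy₁_last, -, hy₁_len, hy₂_len⟩ :=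
      exists_short_colex (hx 1) (hx 2) h₁₂
    refine ⟨![y₀, y₁, y₂], ?_, (colex_congr_getLast? h hy₀_last hy₁_last).2 h₀₁, hy₁₂, ?_⟩
    · simp [Fin.forall_fin_succ, hy₀, hy₁, hy₂]
    · simp [Fin.forall_fin_succ, le_add_left hy₀_len, hy₁_len, hy₂_len]
  · obtain ⟨y₀, y₁, hy₀, hy₁, hy₀₁, -, hy₁_last, hy₀_len, hy₁_len⟩ :=
      exists_short_colex (hx 0) (hx 1) h₀₁
    obtain ⟨y₂, hy₂, hy₂_last, hy₂_len⟩ := exists_short_run (hx 2)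
    refine ⟨![y₀, y₁, y₂], ?_, hy₀₁, (colex_congr_getLast? h hy₁_last hy₂_last).2 h₁₂, ?_⟩
    · simp [Fin.forall_fin_succ, hy₀, hy₁, hy₂]
    · simp [Fin.forall_fin_succ, le_add_left hy₂_len, hy₀_len, hy₁_len]

namespace IsAlternating

theorem exists_short_append [Fintype Q] {x : Fin 3 → List A} {w : List A} {s : Fin 3 → Q}
    (h : M.IsAlternating (fun i => x i ++ w) s) :
    ∃ (y : Fin 3 → List A) (t : List A), M.IsAlternating (fun i => y i ++ t) s ∧
      w.length ≤ t.length ∧ ∀ i, (y i).length ≤ Fintype.card Q ^ 2 + Fintype.card Q := by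
  choose q hq using fun i => (evalFrom_append_eq_some_iff.1 (h.evalFrom_eq i)).imp fun _ => And.left
  have hx : M.IsAlternating x q := h.of_append hq
  obtain ⟨z, v, hz, hlast⟩ :=
    exists_append_getLast?_ne x (ne_of_irrefl (r := Colex) hx.colex_zero_one)
  obtain rfl : x = fun i => z i ++ v := funext hz
  simp only [List.append_assoc] at h
  choose p hp hpt using fun i => evalFrom_append_eq_some_iff.1 (h.evalFrom_eq i)
  have hz : M.IsAlternating z p := h.of_append hp
  obtain ⟨y, hy, hy₀₁, hy₁₂, hy_len⟩ :=
    exists_short_colex_triple hp hz.colex_zero_one hz.colex_one_two hlast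
  exact ⟨y, v ++ w, { h with
    colex_zero_one := (colex_append_right_iff _).2 hy₀₁
    colex_one_two := (colex_append_right_iff _).2 hy₁₂
    evalFrom_eq := fun i => evalFrom_append_eq_some (hy i) (hpt i) }, by simp, hy_len⟩

theorem exists_loop [Fintype Q] {y : Fin 3 → List A} {t : List A} {s : Fin 3 → Q} {C : ℕ}
    (h : M.IsAlternating (fun i => y i ++ t) s) (ht : Fintype.card Q ^ 3 ≤ t.length)
    (hy : ∀ i, (y i).length ≤ C) :
    ∃ (x : Fin 3 → List A) (γ : List A) (u : Fin 3 → Q), M.IsAlternating x u ∧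
      (∀ i, M.evalFrom (u i) γ = some (u i)) ∧ (∀ i, (x i).length < γ.length) ∧
      γ.length ≤ Fintype.card Q ^ 3 + C := by
  choose p hp hpt using fun i => evalFrom_append_eq_some_iff.1 (h.evalFrom_eq i)
  obtain ⟨w, δ, t', u, rfl, hδ, hwδ, hw, hu, -⟩ := exists_common_loop hpt (by simpa using ht)
  obtain ⟨k, hk, hk'⟩ := exists_length_wpow_mem_Ioc hδ (C + w.length)
  rw [Fintype.card_fin] at hwδ
  have hassoc : ∀ i, y i ++ (w ++ δ ++ t') = (y i ++ w) ++ (δ ++ t') := by simp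
  simp only [hassoc] at h
  refine ⟨fun i => y i ++ w, wpow δ k, u,
    h.of_append fun i => evalFrom_append_eq_some (hp i) (hw i),
    fun i => evalFrom_wpow (hu i) k, fun i => ?_, by omega⟩
  rw [List.length_append]
  exact (Nat.add_le_add_right (hy i) _).trans_lt hk

theorem exists_isNonWheelerWitness {x : Fin 3 → List A} {γ : List A} {u : Fin 3 → Q}
    (h : M.IsAlternating x u) (hloop : ∀ i, M.evalFrom (u i) γ = some (u i))
    (hx : ∀ i, (x i).length < γ.length) :
    ∃ i j, M.IsNonWheelerWitness (x i) (x j) γ (u i) (u j) := by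
  have hsuffix : ∀ i, ¬ γ <:+ x i := fun i hi => (hx i).not_ge hi.length_le
  have hpref : ∀ i, x i ∈ Pref M.accepts := fun i =>
    (mem_pref_accepts_iff (h.evalFrom_eq i)).2 (h.acceptsFrom_nonempty i)
  have hwitness : ∀ i j, M.acceptsFrom (u i) ≠ M.acceptsFrom (u j) →
      (Colex (x i) γ ∧ Colex (x j) γ ∨ Colex γ (x i) ∧ Colex γ (x j)) →
      M.IsNonWheelerWitness (x i) (x j) γ (u i) (u j) := fun i j hne hside =>
    ⟨hsuffix i, hsuffix j, h.evalFrom_eq i, h.evalFrom_eq j, hpref i, hpref j,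
      by rwa [rc_accepts (h.evalFrom_eq i), rc_accepts (h.evalFrom_eq j)],
      hloop i, hloop j, hside⟩
  rcases trichotomous_of Colex (x 1) γ with hlt | heq | hgt
  · exact ⟨0, 1, hwitness 0 1 h.acceptsFrom_zero_ne_one
      (Or.inl ⟨trans_of Colex h.colex_zero_one hlt, hlt⟩)⟩
  · exact absurd (hx 1) (by rw [heq]; exact lt_irrefl _)
  · exact ⟨1, 2, hwitness 1 2 h.acceptsFrom_one_ne_two
      (Or.inr ⟨hgt, trans_of Colex hgt h.colex_one_two⟩)⟩

end IsAlternating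

end Alternation

section Characterization

variable {A Q : Type} [Finite A] [LinearOrder A] [Fintype Q] {M : PDFA A Q}

theorem exists_short_isNonWheelerWitness (h : ¬ Finite (ConvexClass M.accepts)) :
    ∃ (μ ν γ : List A) (u v : Q), M.IsNonWheelerWitness μ ν γ u v ∧
      μ.length < γ.length ∧ ν.length < γ.length ∧
      γ.length ≤ Fintype.card Q ^ 3 + Fintype.card Q ^ 2 + Fintype.card Q := by
  have : Infinite (ConvexClass M.accepts) := not_finite_iff_infinite.1 h
  obtain ⟨x, w, s, hw, hx⟩ :=
    exists_isAlternating_append (M := M) (Nat.succ_pos (Fintype.card Q ^ 3))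
  obtain ⟨y, t, hy, hwt, hy_len⟩ := hx.exists_short_append
  obtain ⟨z, γ, u, hz, hloop, hz_len, hγ⟩ := hy.exists_loop (by omega) hy_len
  obtain ⟨i, j, hwitness⟩ := hz.exists_isNonWheelerWitness hloop hz_len
  exact ⟨z i, z j, γ, u i, u j, hwitness, hz_len i, hz_len j, by omega⟩

end Characterization

end PDFA

theorem statement0_general {A Q : Type} [Finite A] [LinearOrder A] [Fintype Q] (M : PDFA A Q) :
    (¬ IsWheelerLang M.accepts ↔ ∃ (μ ν γ : List A) (u v : Q), M.IsNonWheelerWitness μ ν γ u v) ∧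
    (¬ IsWheelerLang M.accepts → ∃ (μ ν γ : List A) (u v : Q), M.IsNonWheelerWitness μ ν γ u v ∧
      μ.length < γ.length ∧ ν.length < γ.length ∧
      γ.length ≤ Fintype.card Q ^ 3 + Fintype.card Q ^ 2 + Fintype.card Q) := by
  rw [isWheelerLang_iff_finite_convexClass]
  refine ⟨⟨fun h => ?_, ?_⟩, PDFA.exists_short_isNonWheelerWitness⟩
  · obtain ⟨μ, ν, γ, u, v, hwitness, -⟩ := PDFA.exists_short_isNonWheelerWitness h
    exact ⟨μ, ν, γ, u, v, hwitness⟩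
  · rintro ⟨μ, ν, γ, u, v, hwitness⟩
    exact hwitness.not_finite_convexClass

section Statement0

/-- Theorem 3 of the paper: characterization of
non-Wheelerness of the language of a trim DFA, with bounds on the witnesses. -/
theorem statement0 {A : Type} [Fintype A] [LinearOrder A] {n : ℕ}
    (M : PDFA A (Fin n)) (htrim : M.Trim)
    (L : Set (List A)) (hL : L = M.accepts) :
    (¬ IsWheelerLang L ↔
      ∃ (μ ν γ : List A) (u v : Fin n),
        ¬ γ <:+ μ ∧ ¬ γ <:+ ν ∧
        M.evalFrom M.init μ = some u ∧ M.evalFrom M.init ν = some v ∧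
        rc L μ ≠ rc L ν ∧
        M.evalFrom u γ = some u ∧ M.evalFrom v γ = some v ∧
        ((Colex μ γ ∧ Colex ν γ) ∨ (Colex γ μ ∧ Colex γ ν))) ∧
    (¬ IsWheelerLang L →
      ∃ (μ ν γ : List A) (u v : Fin n),
        ¬ γ <:+ μ ∧ ¬ γ <:+ ν ∧
        M.evalFrom M.init μ = some u ∧ M.evalFrom M.init ν = some v ∧
        rc L μ ≠ rc L ν ∧
        M.evalFrom u γ = some u ∧ M.evalFrom v γ = some v ∧
        ((Colex μ γ ∧ Colex ν γ) ∨ (Colex γ μ ∧ Colex γ ν)) ∧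
        μ.length ≤ γ.length ∧ ν.length ≤ γ.length ∧
        γ.length ≤ n ^ 3 + 2 * n ^ 2 + n + 2) := by
  subst hL
  obtain ⟨hiff, hshort⟩ := statement0_general M
  simp only [PDFA.isNonWheelerWitness_iff htrim.2, and_assoc, Fintype.card_fin] at hiff hshort
  refine ⟨hiff, fun h => ?_⟩
  obtain ⟨μ, ν, γ, u, v, hμ, hν, hu, hv, hne, hu_loop, hv_loop, hside, hμγ, hνγ, hγ⟩ := hshort h
  exact ⟨μ, ν, γ, u, v, hμ, hν, hu, hv, hne, hu_loop, hv_loop, hside, hμγ.le, hνγ.le, by omega⟩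

end Statement0

end WheelerPaper
end

section
/- Let a, b be two distinct symbols and let L₀ = a(aba)*a + ba(aba)*b, i.e. L₀ = {a(aba)^n a : n ≥ 0} ∪ {ba(aba)^n b : n ≥ 0} over the alphabet {a,b}. Then for every linear order ≺ on {a,b}, the language L₀ is not Wheeler with respect to ({a,b},≺). In particular, L₀ is not a generalized Wheeler language. -/
/-!
Common framework: words over an ordered alphabet, co-lexicographic order,
(partial) DFAs and NFAs, Wheeler automata and Wheeler languages,
following "Ordering regular languages: a danger zone".
-/

namespace WheelerPaper

section Statement4

/-!
The states that a Wheeler DFA reaches on co-lexicographically increasing words are weakly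
increasing. Every word follows its own suffixes co-lexicographically, whatever the order of the
alphabet, and `a`, `ba`, `aaba`, `baaba`, … are each a suffix of the next. Words at even positions,
`a(aba)ⁿ`, can be completed by `a` to a word of `L₀`, those at odd positions, `ba(aba)ⁿ`, cannot,
so consecutive states differ: they increase strictly forever, which no finite automaton allows.
-/

section Evaluation

variable {A Q : Type} (M : PDFA A Q)

theorem PDFA.evalFrom_append_s4 (q : Q) (α β : List A) :
    M.evalFrom q (α ++ β) = (M.evalFrom q α).bind fun p => M.evalFrom p β := by
  induction α generalizing q with
  | nil => rfl
  | cons c α ih => simp [PDFA.evalFrom, ih, Option.bind_assoc]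

theorem PDFA.evalFrom_concat (q : Q) (α : List A) (c : A) :
    M.evalFrom q (α ++ [c]) = (M.evalFrom q α).bind fun p => M.trans p c := by
  simp [M.evalFrom_append_s4, PDFA.evalFrom]

variable {M}

theorem PDFA.rc_accepts_eq {α : List A} {q : Q} (h : M.evalFrom M.init α = some q) :
    rc M.accepts α = {γ | ∃ t, M.evalFrom q γ = some t ∧ M.accept t} := by
  simp [rc, PDFA.accepts, M.evalFrom_append_s4, h]

theorem PDFA.exists_evalFrom_eq_some {α : List A} (h : α ∈ Pref M.accepts) :
    ∃ q, M.evalFrom M.init α = some q := by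
  obtain ⟨β, t, ht, -⟩ := h
  rw [M.evalFrom_append_s4, Option.bind_eq_some_iff] at ht
  exact ht.imp fun _ => And.left

end Evaluation

section Wheeler

variable {A : Type} [LinearOrder A]

theorem ColexLE.of_isSuffix {α β : List A} (h : α <:+ β) : ColexLE α β := by
  obtain ⟨γ, rfl⟩ := h
  rcases γ.eq_nil_or_concat with rfl | ⟨γ, c, rfl⟩
  · exact Or.inr rfl
  · left
    simpa [Colex] using List.Lex.append_left (· < ·) (List.Lex.nil (a := c) (l := γ.reverse))
      α.reverse

section WheelerOrder

variable {Q : Type} {M : PDFA A Q} {r : Q → Q → Prop}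

theorem IsWheelerOrder.evalFrom_init_le_of_lex_reverse (hr : IsWheelerOrder M r) {x y : List A}
    (h : List.Lex (· < ·) x y) {p q : Q} (hp : M.evalFrom M.init x.reverse = some p)
    (hq : M.evalFrom M.init y.reverse = some q) : r p q ∨ p = q := by
  obtain ⟨-, init_min, -, wheeler⟩ := hr
  induction h generalizing p q with
  | nil =>
    obtain rfl : M.init = p := Option.some.inj hp
    exact (eq_or_ne q M.init).symm.imp (init_min q) Eq.symm
  | rel hlt =>
    simp only [List.reverse_cons, M.evalFrom_concat, Option.bind_eq_some_iff] at hp hq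
    obtain ⟨p', -, hp⟩ := hp
    obtain ⟨q', -, hq⟩ := hq
    exact Or.inl ((wheeler p' _ p q' _ q hp hq).1 hlt)
  | cons _ ih =>
    simp only [List.reverse_cons, M.evalFrom_concat, Option.bind_eq_some_iff] at hp hq
    obtain ⟨p', hp', hp⟩ := hp
    obtain ⟨q', hq', hq⟩ := hq
    rcases ih hp' hq' with hlt | rfl
    · exact (wheeler p' _ p q' _ q hp hq).2 rfl hlt
    · exact Or.inr (Option.some.inj (hp.symm.trans hq))

theorem IsWheelerOrder.evalFrom_init_mono (hr : IsWheelerOrder M r) {α β : List A}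
    (h : ColexLE α β) {p q : Q} (hp : M.evalFrom M.init α = some p)
    (hq : M.evalFrom M.init β = some q) : r p q ∨ p = q := by
  rcases h with hlt | rfl
  · exact hr.evalFrom_init_le_of_lex_reverse hlt (by rwa [List.reverse_reverse])
      (by rwa [List.reverse_reverse])
  · exact Or.inr (Option.some.inj (hp.symm.trans hq))

theorem IsWheelerOrder.exists_rc_eq_of_interleaved [Finite Q] (hr : IsWheelerOrder M r)
    {u v : ℕ → List A} (hu : ∀ n, u n ∈ Pref M.accepts) (hv : ∀ n, v n ∈ Pref M.accepts)
    (huv : ∀ n, ColexLE (u n) (v n)) (hvu : ∀ n, ColexLE (v n) (u (n + 1))) :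
    ∃ n, rc M.accepts (u n) = rc M.accepts (v n) := by
  have := hr.1
  choose p hp using fun n => PDFA.exists_evalFrom_eq_some (hu n)
  choose q hq using fun n => PDFA.exists_evalFrom_eq_some (hv n)
  by_contra! rc_ne
  have p_ne_q (n : ℕ) : p n ≠ q n := fun h =>
    rc_ne n (by rw [PDFA.rc_accepts_eq (hp n), PDFA.rc_accepts_eq (hq n), h])
  have p_lt_q (n : ℕ) : r (p n) (q n) :=
    (hr.evalFrom_init_mono (huv n) (hp n) (hq n)).resolve_right (p_ne_q n)
  have p_lt_succ (n : ℕ) : r (p n) (p (n + 1)) := by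
    rcases hr.evalFrom_init_mono (hvu n) (hq n) (hp (n + 1)) with hlt | heq
    · exact _root_.trans (p_lt_q n) hlt
    · exact heq ▸ p_lt_q n
  exact not_injective_infinite_finite p (RelEmbedding.natLT p p_lt_succ).injective

end WheelerOrder

theorem IsWheelerLang.exists_rc_eq_of_interleaved {L : Set (List A)} (hL : IsWheelerLang L)
    {u v : ℕ → List A} (hu : ∀ n, u n ∈ Pref L) (hv : ∀ n, v n ∈ Pref L)
    (huv : ∀ n, ColexLE (u n) (v n)) (hvu : ∀ n, ColexLE (v n) (u (n + 1))) :
    ∃ n, rc L (u n) = rc L (v n) := by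
  obtain ⟨_, M, r, hr, rfl⟩ := hL
  exact hr.exists_rc_eq_of_interleaved hu hv huv hvu

end Wheeler

section AbaLang

variable {A : Type}

/-- The language `L₀ = a(aba)*a + ba(aba)*b`, over an alphabet that may have letters other than
`a` and `b`. -/
def abaLang (a b : A) : Set (List A) :=
  {w | ∃ n : ℕ, w = [a] ++ wpow [a, b, a] n ++ [a]} ∪
    {w | ∃ n : ℕ, w = [b, a] ++ wpow [a, b, a] n ++ [b]}

theorem singleton_mem_rc_abaLang_left (a b : A) (n : ℕ) :
    [a] ∈ rc (abaLang a b) ([a] ++ wpow [a, b, a] n) :=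
  Or.inl ⟨n, rfl⟩

theorem singleton_mem_rc_abaLang_right (a b : A) (n : ℕ) :
    [b] ∈ rc (abaLang a b) ([b, a] ++ wpow [a, b, a] n) :=
  Or.inr ⟨n, rfl⟩

theorem singleton_notMem_rc_abaLang_cons {a b : A} (hab : a ≠ b) (α : List A) :
    [a] ∉ rc (abaLang a b) (b :: α) := by
  rintro (⟨k, hk⟩ | ⟨k, hk⟩)
  · exact hab (List.cons.inj hk).1.symm
  · exact hab (List.singleton_inj.mp (List.append_inj' hk rfl).2)

theorem statement4_general [LinearOrder A] {a b : A} (hab : a ≠ b) :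
    ¬ IsWheelerLang (abaLang a b) := by
  intro hL
  obtain ⟨n, hn⟩ := hL.exists_rc_eq_of_interleaved
    (u := fun n => [a] ++ wpow [a, b, a] n) (v := fun n => [b, a] ++ wpow [a, b, a] n)
    (fun n => ⟨[a], singleton_mem_rc_abaLang_left a b n⟩)
    (fun n => ⟨[b], singleton_mem_rc_abaLang_right a b n⟩)
    (fun _ => .of_isSuffix ⟨[b], rfl⟩) (fun _ => .of_isSuffix ⟨[a, a], rfl⟩)
  exact singleton_notMem_rc_abaLang_cons hab _ (hn ▸ singleton_mem_rc_abaLang_left a b n)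

end AbaLang

/-- Proposition 2 of the paper: the star-free language
`a(aba)*a + ba(aba)*b` is not Wheeler for any linear order on the binary
alphabet `{a,b}`; in particular it is not a generalized Wheeler language. -/
theorem statement4 {A : Type} (a b : A) (hab : a ≠ b)
    (hcover : ∀ x : A, x = a ∨ x = b)
    (L : Set (List A))
    (hL : L = {w | ∃ n : ℕ, w = [a] ++ wpow [a, b, a] n ++ [a]} ∪
              {w | ∃ n : ℕ, w = [b, a] ++ wpow [a, b, a] n ++ [b]}) :
    (∀ inst : LinearOrder A, ¬ @IsWheelerLang A inst L) ∧
    ¬ ∃ inst : LinearOrder A, @IsWheelerLang A inst L := by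
  subst hL
  exact ⟨fun _ => statement4_general hab, fun ⟨_, hL⟩ => statement4_general hab hL⟩

end Statement4

end WheelerPaper
end
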